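/- Let m ≥ 0, n ≥ 0, let a = (a_1,…,a_n) and b = (b_1,…,b_n) be tuples of nonnegative integers, and set c_i := a_i + m - b_i. Define g_m(a,b;v) := ∑_{k=0}^{m} v^k · (v;t)_{m-k} · C(m,k)_t · ∏_{i=1}^{n} C(k+a_i, b_i)_t ∈ ℤ[v,t]. Then g_m(a,b;v) = ∑_{p} ∏_{i=1}^{n} v^{p_{i-1}-p_i} · t^{(p_{i-1}-p_i)(c_i-p_i)} · C(p_{i-1}, p_i)_t · C(a_i+m-p_{i-1}, c_i-p_i)_t, where the sum runs over integer tuples p = (p_1,…,p_n) with m = p_0 ≥ p_1 ≥ … ≥ p_n ≥ 0 that moreover satisfy p_i ≤ c_i and p_{i-1} - p_i ≤ b_i for all i (all other such tuples contribute zero). In particular g_m(a,b;v) is a polynomial in v and t with nonnegative integer coefficients. -/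

import Mathlib

open Finset

noncomputable section

attribute [local instance] Classical.propDecidable

/-- The Gaussian binomial coefficient `C(a,b)_t` for natural arguments,
as a polynomial in `t` (it vanishes when `b > a`). -/
def gaussNat : ℕ → ℕ → Polynomial ℤ
  | _, 0 => 1
  | 0, _ + 1 => 0
  | a + 1, b + 1 => gaussNat a b + Polynomial.X ^ (b + 1) * gaussNat a (b + 1)

/-- The Gaussian binomial coefficient `C(a,b)_t ∈ ℤ[t]`, set to `0` unless `a ≥ b ≥ 0`. -/
def gaussInt (a b : ℤ) : Polynomial ℤ :=
  if 0 ≤ b ∧ b ≤ a then gaussNat a.toNat b.toNat else 0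

/-- The t-Pochhammer symbol `(w;t)_k = ∏_{i=0}^{k-1} (1 - w tⁱ)`. -/
def pochh {R : Type*} [CommRing R] (w t : R) (k : ℕ) : R :=
  ∏ i ∈ Finset.range k, (1 - w * t ^ i)

/-- `g_m(a,b;v)` as an element of `(ℤ[t])[v]` (outer variable `v`, inner variable `t`). -/
def gPoly (m n : ℕ) (a b : ℕ → ℕ) : Polynomial (Polynomial ℤ) :=
  ∑ k ∈ Finset.range (m + 1),
    Polynomial.X ^ k *
      pochh (R := Polynomial (Polynomial ℤ)) Polynomial.X (Polynomial.C Polynomial.X) (m - k) *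
      Polynomial.C (gaussInt m k) *
      ∏ i ∈ Finset.Icc 1 n, Polynomial.C (gaussInt ((k : ℤ) + a i) (b i))

/-- Accessor for the summation variables `p_i` of Statement 10, with `p_0 = m`. -/
def pval (m n : ℕ) (f : Fin n → ℕ) (i : ℕ) : ℕ :=
  if i = 0 then m else if h : i - 1 < n then f ⟨i - 1, h⟩ else 0

/-- The summation set of Statement 10: tuples `m = p_0 ≥ p_1 ≥ … ≥ p_n ≥ 0` with
`p_i ≤ c_i` and `p_{i-1} - p_i ≤ b_i`. -/
def pFinset (m n : ℕ) (a b : ℕ → ℕ) : Finset (Fin n → ℕ) :=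
  (Fintype.piFinset fun _ : Fin n => Finset.range (m + 1)).filter fun f =>
    ∀ i, 1 ≤ i → i ≤ n →
      pval m n f i ≤ pval m n f (i - 1) ∧
      (pval m n f i : ℤ) ≤ (a i : ℤ) + m - b i ∧
      pval m n f (i - 1) - pval m n f i ≤ b i

/-!
The identity is proved by induction on `n`, peeling off the first factor `C(k + a₁, b₁)` of the
product defining `g_m`. The `t`-Vandermonde convolution (`gaussNat_vandermonde`) reads
`C(k + a, b) = ∑ₛ t^{s(a - b + s)} C(k, s) C(a, b - s)`; with `p = m - s`, trinomial revision gives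
`C(m, k) C(k, s) = C(m, p) C(p, k - s)` (`gauss_step`). After exchanging the two sums, the sum
over `k = s + k'` for fixed `p` is `v^{m-p}` times a `g_p` with one factor fewer and with each `aᵢ`
raised by `m - p`, a change that preserves every `cᵢ = aᵢ + m - bᵢ` (`gPoly_succ`). Iterating
yields the sum over tuples (`gPoly_eq_sum`); the constraints `p₁ ≤ c₁` and `m - p₁ ≤ b₁` only
discard zero terms. For `n = 0` the claim is
`∑ₖ vᵏ (v;t)_{m-k} C(m, k) = 1`, which follows from Pascal's rule by induction on `m`
(`gPoly_zero`).

Every summand is visibly in the image of `ℕ[t][v]`, whence the nonnegativity.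
-/

/-! ### Gaussian binomial coefficients -/

/-- The product `(1 - t)(1 - t²)⋯(1 - tⁿ)`, the unnormalised `t`-factorial. -/
def tFact (n : ℕ) : Polynomial ℤ := ∏ i ∈ Finset.range n, (1 - Polynomial.X ^ (i + 1))

lemma tFact_ne_zero (n : ℕ) : tFact n ≠ 0 := by
  refine Finset.prod_ne_zero_iff.mpr fun i _ h => ?_
  have := congrArg (Polynomial.eval 0) h
  simp at this

lemma tFact_succ (n : ℕ) : tFact (n + 1) = tFact n * (1 - Polynomial.X ^ (n + 1)) :=
  Finset.prod_range_succ _ _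

lemma gaussNat_zero_right (a : ℕ) : gaussNat a 0 = 1 := by
  cases a <;> simp [gaussNat]

lemma gaussNat_succ_succ (a b : ℕ) : gaussNat (a + 1) (b + 1) =
    gaussNat a b + Polynomial.X ^ (b + 1) * gaussNat a (b + 1) := by
  simp [gaussNat]

lemma gaussNat_eq_zero {a b : ℕ} (h : a < b) : gaussNat a b = 0 := by
  induction a generalizing b with
  | zero => obtain ⟨b, rfl⟩ := Nat.exists_eq_succ_of_ne_zero h.ne'; simp [gaussNat]
  | succ a ih =>
    obtain ⟨b, rfl⟩ := Nat.exists_eq_succ_of_ne_zero (by omega : b ≠ 0)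
    rw [Nat.succ_eq_add_one, gaussNat_succ_succ, ih (by omega), ih (by omega)]
    simp

lemma gaussNat_self (a : ℕ) : gaussNat a a = 1 := by
  induction a with
  | zero => simp [gaussNat]
  | succ a ih => rw [gaussNat_succ_succ, ih, gaussNat_eq_zero (by omega)]; simp

/-- The quotient-of-factorials formula for Gaussian binomials, with denominators cleared. -/
lemma gaussNat_mul_tFact (a b : ℕ) :
    gaussNat (a + b) a * (tFact a * tFact b) = tFact (a + b) := by
  induction b generalizing a with
  | zero => simp [gaussNat_self, tFact]
  | succ b ihb =>
    induction a with
    | zero => simp [gaussNat_zero_right, tFact]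
    | succ a iha =>
      have h1 := ihb (a + 1)
      rw [show a + 1 + b = a + b + 1 by ring] at h1
      rw [show a + (b + 1) = a + b + 1 by ring] at iha
      rw [show a + 1 + (b + 1) = a + b + 1 + 1 by ring, gaussNat_succ_succ, tFact_succ (a + b + 1)]
      have e1 := tFact_succ a
      have e2 := tFact_succ b
      linear_combination (1 - Polynomial.X ^ (a + 1)) * iha +
        Polynomial.X ^ (a + 1) * (1 - Polynomial.X ^ (b + 1)) * h1 +
        gaussNat (a + b + 1) a * tFact (b + 1) * e1 +
        Polynomial.X ^ (a + 1) * gaussNat (a + b + 1) (a + 1) * tFact (a + 1) * e2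

lemma gaussNat_symm (a b : ℕ) : gaussNat (a + b) a = gaussNat (a + b) b := by
  have h1 := gaussNat_mul_tFact a b
  have h2 := gaussNat_mul_tFact b a
  rw [add_comm b a] at h2
  refine mul_right_cancel₀ (mul_ne_zero (tFact_ne_zero a) (tFact_ne_zero b)) ?_
  linear_combination h1 - h2

/-- Trinomial revision: both sides are the Gaussian trinomial coefficient of `x + y + z`. -/
lemma gaussNat_trinomial (x y z : ℕ) :
    gaussNat (x + y + z) (x + y) * gaussNat (x + y) x =
      gaussNat (x + y + z) (y + z) * gaussNat (y + z) y := by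
  have h1 := gaussNat_mul_tFact (x + y) z
  have h2 := gaussNat_mul_tFact x y
  have h3 := gaussNat_mul_tFact (y + z) x
  have h4 := gaussNat_mul_tFact y z
  rw [show y + z + x = x + y + z by ring] at h3
  refine mul_right_cancel₀
    (mul_ne_zero (tFact_ne_zero x) (mul_ne_zero (tFact_ne_zero y) (tFact_ne_zero z))) ?_
  linear_combination h1 + gaussNat (x + y + z) (x + y) * tFact z * h2 - h3 -
    gaussNat (x + y + z) (y + z) * tFact x * h4

/-- The `t`-Vandermonde convolution. The truncated exponent `a - q.2` is harmless, since the
factor `gaussNat a q.2` vanishes when `q.2 > a`. -/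
lemma gaussNat_vandermonde (k a b : ℕ) :
    gaussNat (k + a) b = ∑ q ∈ Finset.HasAntidiagonal.antidiagonal b,
      Polynomial.X ^ (q.1 * (a - q.2)) * gaussNat k q.1 * gaussNat a q.2 := by
  induction a generalizing b with
  | zero =>
    rw [Finset.sum_eq_single (b, 0)]
    · simp [gaussNat]
    · rintro ⟨s, r⟩ hq hne
      have : r ≠ 0 := by
        rintro rfl
        simp at hq hne
        exact hne hq
      simp only
      rw [gaussNat_eq_zero (a := 0) (b := r) (by omega), mul_zero]
    · simp
  | succ a ih =>
    cases b with
    | zero => simp [gaussNat_zero_right]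
    | succ b =>
      rw [← add_assoc, gaussNat_succ_succ, ih b, ih (b + 1),
        Finset.Nat.antidiagonal_succ', Finset.sum_cons, Finset.sum_cons, Finset.sum_map,
        Finset.sum_map, mul_add, Finset.mul_sum]
      simp only [Function.Embedding.prodMap, Function.Embedding.coeFn_mk, Prod.map,
        Function.Embedding.refl_apply, gaussNat_zero_right]
      rw [add_left_comm, ← Finset.sum_add_distrib]
      congr 1
      · simp only [Nat.sub_zero]; ring
      · refine Finset.sum_congr rfl ?_
        rintro ⟨s, r⟩ hq
        rw [Finset.HasAntidiagonal.mem_antidiagonal] at hq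
        simp only at hq ⊢
        simp only [Nat.succ_eq_add_one]
        rw [gaussNat_succ_succ a r, Nat.add_sub_add_right]
        rcases lt_or_ge a (r + 1) with h | h
        · rw [gaussNat_eq_zero h]; ring
        · obtain ⟨d, rfl⟩ := Nat.exists_eq_add_of_le h
          subst hq
          rw [show r + 1 + d - (r + 1) = d by omega, show r + 1 + d - r = d + 1 by omega]
          ring

lemma gaussInt_natCast (a b : ℕ) : gaussInt a b = gaussNat a b := by
  unfold gaussInt
  split_ifs with h
  · simp
  · rw [gaussNat_eq_zero (by omega)]

/-- The complementary Gaussian binomial `C(a, a - (b - s))` equals `C(a, b - s)`. -/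
lemma gaussInt_compl (a b s : ℕ) : gaussInt a ((a : ℤ) - b + s) =
    if s ≤ b then gaussNat a (b - s) else 0 := by
  by_cases h : s ≤ b ∧ b - s ≤ a
  · obtain ⟨h1, h2⟩ := h
    obtain ⟨r, rfl⟩ := Nat.exists_eq_add_of_le h1
    obtain ⟨d, rfl⟩ := Nat.exists_eq_add_of_le (by omega : r ≤ a)
    rw [if_pos h1, show (((r + d : ℕ) : ℤ) - (s + r : ℕ) + s) = (d : ℕ) by push_cast; ring,
      gaussInt_natCast, show s + r - s = r by omega, gaussNat_symm r d]
  · rw [gaussInt, if_neg (by omega)]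
    split_ifs with h1
    · rw [gaussNat_eq_zero (by omega)]
    · rfl

/-- One step of the expansion, at the level of coefficients: `t`-Vandermonde for `C(k + a, b)`
combined with trinomial revision, indexed by `p = m - s`. -/
lemma gauss_step (m k a b : ℕ) (hk : k ≤ m) :
    gaussInt m k * gaussInt ((k : ℤ) + a) b =
      ∑ p ∈ Finset.range (m + 1),
        Polynomial.X ^ ((m - p) * ((a : ℤ) + m - b - p).toNat) * gaussInt m p *
          gaussInt a ((a : ℤ) + m - b - p) *
          (if m - p ≤ k then gaussNat p (k - (m - p)) else 0) := by
  have hV : gaussNat (k + a) b = ∑ s ∈ Finset.range (m + 1),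
      Polynomial.X ^ (s * ((a : ℤ) - b + s).toNat) * gaussNat k s *
        (if s ≤ b then gaussNat a (b - s) else 0) := by
    rw [gaussNat_vandermonde, Finset.Nat.sum_antidiagonal_eq_sum_range_succ_mk]
    have hb : Finset.range (b + 1) ⊆ Finset.range (m + b + 1) := by
      intro x; simp only [Finset.mem_range]; omega
    have hm : Finset.range (m + 1) ⊆ Finset.range (m + b + 1) := by
      intro x; simp only [Finset.mem_range]; omega
    rw [Finset.sum_subset hm]
    · rw [← Finset.sum_subset hb]
      · refine Finset.sum_congr rfl fun s hs => ?_
        have hs' : s ≤ b := by simpa [Nat.lt_succ_iff] using hs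
        simp only [if_pos hs']
        rcases lt_or_ge a (b - s) with h | h
        · simp [gaussNat_eq_zero h]
        · rw [show ((a : ℤ) - b + s).toNat = a - (b - s) by omega]
      · intro s _ hs
        rw [if_neg (by simpa [Nat.lt_succ_iff] using hs), mul_zero]
    · intro s _ hs
      rw [Finset.mem_range] at hs
      rw [gaussNat_eq_zero (a := k) (b := s) (by omega)]; simp
  rw [← Nat.cast_add, gaussInt_natCast, gaussInt_natCast, hV, Finset.mul_sum,
    ← Finset.sum_range_reflect]
  refine Finset.sum_congr rfl fun p hp => ?_
  have hp' : p ≤ m := by simpa [Nat.lt_succ_iff] using hp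
  obtain ⟨s, rfl⟩ := Nat.exists_eq_add_of_le hp'
  rw [show p + s + 1 - 1 - p = s by omega, show p + s - p = s by omega,
    show (a : ℤ) + (p + s : ℕ) - b - p = a - b + s by push_cast; ring, gaussInt_compl,
    gaussInt_natCast]
  have key : gaussNat (p + s) k * gaussNat k s =
      gaussNat (p + s) p * (if s ≤ k then gaussNat p (k - s) else 0) := by
    split_ifs with h
    · obtain ⟨y, rfl⟩ := Nat.exists_eq_add_of_le h
      obtain ⟨x, rfl⟩ := Nat.exists_eq_add_of_le (by omega : y ≤ p)
      have := gaussNat_trinomial x y s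
      rw [show x + y + s = y + x + s by ring, show x + y = y + x by ring,
        ← gaussNat_symm y x, add_comm y s, ← gaussNat_symm s y] at this
      rw [Nat.add_sub_cancel_left]
      exact this.symm
    · rw [gaussNat_eq_zero (a := k) (by omega)]; simp
  linear_combination (Polynomial.X ^ (s * ((a : ℤ) - b + s).toNat) *
    (if s ≤ b then gaussNat a (b - s) else 0)) * key

/-! ### The recursion for `g_m` -/

/-- The summand attached to one step `p_{i-1} → p_i` of a tuple, where `x = p_{i-1}`, `y = p_i`
and `a`, `b` stand for `a_i`, `b_i`. -/
def stepTerm (m a b x y : ℕ) : Polynomial (Polynomial ℤ) :=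
  Polynomial.X ^ (x - y) *
    Polynomial.C (Polynomial.X ^ ((x - y) * ((a : ℤ) + m - b - y).toNat)) *
    Polynomial.C (gaussInt x y) *
    Polynomial.C (gaussInt ((a : ℤ) + m - x) ((a : ℤ) + m - b - y))

lemma prod_Icc_succ {M : Type*} [CommMonoid M] (n : ℕ) (f : ℕ → M) :
    ∏ i ∈ Finset.Icc 1 (n + 1), f i = f 1 * ∏ i ∈ Finset.Icc 1 n, f (i + 1) := by
  have h : ∀ n (f : ℕ → M), ∏ i ∈ Finset.Icc 1 n, f i = ∏ i ∈ Finset.range n, f (i + 1) := by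
    intro n f
    rw [Finset.range_eq_Ico, Finset.prod_Ico_add' f 0 n 1]
    rfl
  rw [h, h, Finset.prod_range_succ', mul_comm]

/-- The recursion for `g_m` in the number of factors: the first factor is expanded, and the
remaining ones form a `g_p` whose tuple `a` is raised by `m - p`. -/
lemma gPoly_succ (m n : ℕ) (a b : ℕ → ℕ) :
    gPoly m (n + 1) a b = ∑ p ∈ Finset.range (m + 1), stepTerm m (a 1) (b 1) m p *
      gPoly p n (fun i => a (i + 1) + (m - p)) (fun i => b (i + 1)) := by
  set W : ℕ → Polynomial (Polynomial ℤ) := fun k => Polynomial.X ^ k *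
    pochh (R := Polynomial (Polynomial ℤ)) Polynomial.X (Polynomial.C Polynomial.X) (m - k) *
    ∏ i ∈ Finset.Icc 1 n, Polynomial.C (gaussInt ((k : ℤ) + a (i + 1)) (b (i + 1))) with hW
  -- Substituting `k = (m - p) + k'` turns the inner sum over `k` into `g_p`.
  have inner : ∀ p ∈ Finset.range (m + 1),
      Polynomial.X ^ (m - p) *
        gPoly p n (fun i => a (i + 1) + (m - p)) (fun i => b (i + 1)) =
      ∑ k ∈ Finset.range (m + 1), W k *
        Polynomial.C (if m - p ≤ k then gaussNat p (k - (m - p)) else 0) := by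
    intro p hp
    have hp' : p ≤ m := by simpa [Nat.lt_succ_iff] using hp
    obtain ⟨s, rfl⟩ := Nat.exists_eq_add_of_le hp'
    rw [show p + s - p = s by omega, show p + s + 1 = s + (p + 1) by ring,
      Finset.sum_range_add, Finset.sum_eq_zero, zero_add, gPoly, Finset.mul_sum]
    · refine Finset.sum_congr rfl fun k _ => ?_
      rw [if_pos (by omega), show s + k - s = k by omega, hW, gaussInt_natCast]
      simp only
      rw [show p + s - (s + k) = p - k by omega]
      have : ∀ i, ((s + k : ℕ) : ℤ) + a (i + 1) = (k : ℤ) + (a (i + 1) + s : ℕ) := by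
        intro i; push_cast; ring
      simp only [this]
      ring
    · intro k hk
      rw [if_neg (by simpa using hk)]; simp
  calc gPoly m (n + 1) a b
      = ∑ k ∈ Finset.range (m + 1), W k *
          Polynomial.C (gaussInt m k * gaussInt ((k : ℤ) + a 1) (b 1)) := by
        refine Finset.sum_congr rfl fun k _ => ?_
        rw [prod_Icc_succ, hW, Polynomial.C_mul]
        ring
    _ = ∑ k ∈ Finset.range (m + 1), ∑ p ∈ Finset.range (m + 1),
          Polynomial.C (Polynomial.X ^ ((m - p) * ((a 1 : ℤ) + m - b 1 - p).toNat)) *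
            Polynomial.C (gaussInt m p) *
            Polynomial.C (gaussInt ((a 1 : ℤ) + m - m) ((a 1 : ℤ) + m - b 1 - p)) *
          (W k * Polynomial.C (if m - p ≤ k then gaussNat p (k - (m - p)) else 0)) := by
        refine Finset.sum_congr rfl fun k hk => ?_
        rw [gauss_step m k (a 1) (b 1) (by simpa [Nat.lt_succ_iff] using hk), map_sum,
          Finset.mul_sum]
        refine Finset.sum_congr rfl fun p _ => ?_
        rw [add_sub_cancel_right]
        simp only [Polynomial.C_mul]
        ring
    _ = _ := by
        rw [Finset.sum_comm]
        refine Finset.sum_congr rfl fun p hp => ?_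
        rw [← Finset.mul_sum, ← inner p hp, stepTerm]
        ring

/-- The companion of the recursion defining `gaussNat`, with the power of `t` on the other term. -/
lemma gaussNat_succ_succ' (m k : ℕ) : gaussNat (m + 1) (k + 1) =
    Polynomial.X ^ (m - k) * gaussNat m k + gaussNat m (k + 1) := by
  rcases lt_or_ge m k with h | h
  · rw [gaussNat_eq_zero (a := m + 1) (by omega), gaussNat_eq_zero h,
      gaussNat_eq_zero (a := m) (by omega)]
    simp
  · obtain ⟨d, rfl⟩ := Nat.exists_eq_add_of_le h
    cases d with
    | zero => simp [gaussNat_self, gaussNat_eq_zero]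
    | succ e =>
      have h1 := gaussNat_symm (k + 1) (e + 1)
      have h2 := gaussNat_symm k (e + 1)
      have h3 := gaussNat_symm (k + 1) e
      rw [show k + 1 + (e + 1) = k + (e + 1) + 1 by ring, gaussNat_succ_succ _ e] at h1
      rw [show k + 1 + e = k + (e + 1) by ring] at h3
      rw [h1, ← h2, ← h3, Nat.add_sub_cancel_left]
      ring

/-- The case of no factors: `∑ₖ vᵏ (v;t)_{m-k} C(m, k) = 1`. -/
lemma gPoly_zero (m : ℕ) (a b : ℕ → ℕ) : gPoly m 0 a b = 1 := by
  set P : ℕ → Polynomial (Polynomial ℤ) :=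
    pochh (R := Polynomial (Polynomial ℤ)) Polynomial.X (Polynomial.C Polynomial.X) with hP
  have hS : ∀ m, gPoly m 0 a b = ∑ k ∈ Finset.range (m + 1),
      Polynomial.X ^ k * P (m - k) * Polynomial.C (gaussNat m k) := by
    intro m
    simp [gPoly, gaussInt_natCast, hP]
  induction m with
  | zero => simp [hS, hP, pochh, gaussNat]
  | succ m ih =>
    -- The terms carrying `C(m, k)` without a power of `t`, with the range extended by a zero term.
    have h2 : ∑ k ∈ Finset.range (m + 1),
          Polynomial.X ^ (k + 1) * P (m - k) * Polynomial.C (gaussNat m (k + 1)) + P (m + 1) =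
        ∑ k ∈ Finset.range (m + 1),
          Polynomial.X ^ k * P (m + 1 - k) * Polynomial.C (gaussNat m k) := by
      have := Finset.sum_range_succ (fun k =>
        Polynomial.X ^ k * P (m + 1 - k) * Polynomial.C (gaussNat m k)) (m + 1)
      rw [gaussNat_eq_zero (a := m) (by omega), map_zero, mul_zero, add_zero] at this
      rw [← this, eq_comm, Finset.sum_range_succ']
      simp [gaussNat_zero_right]
    rw [← ih, hS, hS, Finset.sum_range_succ']
    simp only [Nat.add_sub_add_right, gaussNat_succ_succ', Polynomial.C_add, mul_add,
      Finset.sum_add_distrib, gaussNat_zero_right, pow_zero, Nat.sub_zero, map_one, one_mul,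
      mul_one]
    rw [add_assoc, h2, ← Finset.sum_add_distrib]
    refine Finset.sum_congr rfl fun k hk => ?_
    have hk' : k ≤ m := by simpa [Nat.lt_succ_iff] using hk
    have hp : P (m + 1 - k) = P (m - k) *
        (1 - Polynomial.X * Polynomial.C Polynomial.X ^ (m - k)) := by
      rw [Nat.succ_sub hk']
      exact Finset.prod_range_succ _ _
    rw [hp, Polynomial.C_mul, Polynomial.C_pow]
    ring

/-! ### Sums over tuples -/

lemma pval_zero (m n : ℕ) (f : Fin n → ℕ) : pval m n f 0 = m := by simp [pval]

/-- Removing the first entry `p` of a tuple leaves a tuple that starts from `p_0 = p`. -/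
lemma pval_cons (m n p : ℕ) (f : Fin n → ℕ) (i : ℕ) :
    pval m (n + 1) (Fin.cons p f) (i + 1) = pval p n f i := by
  cases i with
  | zero => simp [pval]
  | succ i =>
    by_cases h : i < n
    · simp only [pval]
      rw [if_neg (by omega), dif_pos (by omega), if_neg (by omega), dif_pos (by omega)]
      exact Fin.cons_succ (α := fun _ => ℕ) p f ⟨i, h⟩
    · simp [pval, h]

lemma pval_cons_one (m n p : ℕ) (f : Fin n → ℕ) :
    pval m (n + 1) (Fin.cons p f) 1 = p :=
  (pval_cons m n p f 0).trans (pval_zero p n f)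

/-- The bound `f j ≤ m` built into `pFinset` follows from monotonicity of the tuple. -/
lemma mem_pFinset {m n : ℕ} {a b : ℕ → ℕ} {f : Fin n → ℕ} :
    f ∈ pFinset m n a b ↔ ∀ i, 1 ≤ i → i ≤ n →
      pval m n f i ≤ pval m n f (i - 1) ∧
      (pval m n f i : ℤ) ≤ (a i : ℤ) + m - b i ∧
      pval m n f (i - 1) - pval m n f i ≤ b i := by
  rw [pFinset, @Finset.mem_filter _ _ (_) _ _, and_iff_right_iff_imp]
  intro h
  have hle : ∀ i ≤ n, pval m n f i ≤ m := by
    intro i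
    induction i with
    | zero => simp [pval_zero]
    | succ i ih => exact fun hi => (h (i + 1) (by omega) hi).1.trans (ih (by omega))
  rw [Fintype.mem_piFinset]
  intro j
  have := hle (j + 1) j.2
  simp only [pval] at this
  simpa [Nat.lt_succ_iff] using this

lemma cons_mem_pFinset {m n p : ℕ} {a b : ℕ → ℕ} {f : Fin n → ℕ} :
    (Fin.cons p f : Fin (n + 1) → ℕ) ∈ pFinset m (n + 1) a b ↔
      (p ≤ m ∧ (p : ℤ) ≤ (a 1 : ℤ) + m - b 1 ∧ m - p ≤ b 1) ∧
      f ∈ pFinset p n (fun i => a (i + 1) + (m - p)) (fun i => b (i + 1)) := by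
  rw [mem_pFinset, mem_pFinset]
  constructor
  · intro h
    have h1 := h 1 le_rfl (by omega)
    rw [pval_cons_one, Nat.sub_self, pval_zero] at h1
    refine ⟨h1, fun i hi hin => ?_⟩
    have h2 := h (i + 1) (by omega) (by omega)
    obtain ⟨j, rfl⟩ := Nat.exists_eq_add_of_le' hi
    simp only [Nat.add_sub_cancel, pval_cons] at h2 ⊢
    push_cast
    omega
  · rintro ⟨h1, h2⟩ i hi hin
    obtain ⟨j, rfl⟩ := Nat.exists_eq_add_of_le' hi
    rw [pval_cons, Nat.add_sub_cancel]
    cases j with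
    | zero => simpa only [pval_zero] using h1
    | succ j =>
      have h3 := h2 (j + 1) (by omega) (by omega)
      simp only [Nat.add_sub_cancel, pval_cons] at h3 ⊢
      push_cast at h3
      omega

lemma stepTerm_eq_zero {m a b p : ℕ} (hp : p ≤ m)
    (h : ¬((p : ℤ) ≤ (a : ℤ) + m - b ∧ m - p ≤ b)) : stepTerm m a b m p = 0 := by
  have : gaussInt ((a : ℤ) + m - m) ((a : ℤ) + m - b - p) = 0 := by
    rw [gaussInt, if_neg (by omega)]
  rw [stepTerm, this]; simp

/-- The expansion as a sum over tuples, by iterating `gPoly_succ`. -/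
lemma gPoly_eq_sum (n : ℕ) : ∀ (m : ℕ) (a b : ℕ → ℕ), gPoly m n a b =
    ∑ f ∈ pFinset m n a b, ∏ i ∈ Finset.Icc 1 n,
      stepTerm m (a i) (b i) (pval m n f (i - 1)) (pval m n f i) := by
  induction n with
  | zero =>
    intro m a b
    have huniv : pFinset m 0 a b = Finset.univ := by
      ext f
      simp only [mem_pFinset, Finset.mem_univ, iff_true]
      omega
    rw [huniv, gPoly_zero]
    simp
  | succ n ih =>
    intro m a b
    rw [gPoly_succ]
    have hterm : ∀ p ∈ Finset.range (m + 1), stepTerm m (a 1) (b 1) m p *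
        gPoly p n (fun i => a (i + 1) + (m - p)) (fun i => b (i + 1)) =
        ∑ f ∈ pFinset p n (fun i => a (i + 1) + (m - p)) (fun i => b (i + 1)),
          ∏ i ∈ Finset.Icc 1 (n + 1), stepTerm m (a i) (b i)
            (pval m (n + 1) (Fin.cons p f) (i - 1)) (pval m (n + 1) (Fin.cons p f) i) := by
      intro p hp
      have hp' : p ≤ m := by simpa [Nat.lt_succ_iff] using hp
      rw [ih, Finset.mul_sum]
      refine Finset.sum_congr rfl fun f _ => ?_
      rw [prod_Icc_succ]
      refine congrArg₂ (· * ·) ?_ ?_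
      · rw [pval_cons_one, Nat.sub_self, pval_zero]
      · refine Finset.prod_congr rfl fun i hi => ?_
        obtain ⟨j, rfl⟩ := Nat.exists_eq_add_of_le' (Finset.mem_Icc.mp hi).1
        simp only [Nat.add_sub_cancel, pval_cons, stepTerm]
        have : ((a (j + 1 + 1) + (m - p) : ℕ) : ℤ) + p = (a (j + 1 + 1) : ℤ) + m := by omega
        rw [this]
    refine Eq.trans (Finset.sum_filter_of_ne
      (p := fun p : ℕ => (p : ℤ) ≤ (a 1 : ℤ) + m - b 1 ∧ m - p ≤ b 1) ?_).symm ?_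
    · intro p hp hne
      by_contra hcon
      exact hne (by rw [stepTerm_eq_zero (by simpa [Nat.lt_succ_iff] using hp) hcon, zero_mul])
    · rw [Finset.sum_congr rfl fun p hp => hterm p (Finset.mem_filter.mp hp).1,
        Finset.sum_sigma']
      refine Finset.sum_bij' (fun x _ => (Fin.cons x.1 x.2 : Fin (n + 1) → ℕ))
        (fun f _ => ⟨f 0, Fin.tail f⟩) ?_ ?_ ?_ ?_ ?_
      · rintro ⟨p, f⟩ h
        simp only [Finset.mem_sigma, Finset.mem_filter, Finset.mem_range] at h
        exact cons_mem_pFinset.mpr ⟨⟨Nat.lt_succ_iff.mp h.1.1, h.1.2⟩, h.2⟩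
      · intro f h
        rw [← Fin.cons_self_tail f, cons_mem_pFinset] at h
        simp only [Finset.mem_sigma, Finset.mem_filter, Finset.mem_range]
        exact ⟨⟨by omega, h.1.2⟩, h.2⟩
      · rintro ⟨p, f⟩ _
        simp
      · intro f _
        exact Fin.cons_self_tail f
      · intro x _
        rfl

/-! ### Nonnegativity of the coefficients -/

/-- The inclusion `ℕ[t] → ℤ[t]`; its range consists of the polynomials in `t` with nonnegative
coefficients. -/
abbrev natPoly : Polynomial ℕ →+* Polynomial ℤ := Polynomial.mapRingHom (Nat.castRingHom ℤ)

/-- The inclusion `ℕ[t][v] → ℤ[t][v]`. -/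
abbrev natPoly₂ : Polynomial (Polynomial ℕ) →+* Polynomial (Polynomial ℤ) :=
  Polynomial.mapRingHom natPoly

lemma X_pow_mem (k : ℕ) : (Polynomial.X ^ k : Polynomial ℤ) ∈ natPoly.rangeS :=
  ⟨Polynomial.X ^ k, by simp⟩

lemma gaussNat_mem (a b : ℕ) : gaussNat a b ∈ natPoly.rangeS := by
  induction a generalizing b with
  | zero => cases b <;> simp only [gaussNat] <;> [exact one_mem _; exact zero_mem _]
  | succ a ih =>
    cases b with
    | zero => rw [gaussNat_zero_right]; exact one_mem _
    | succ b =>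
      rw [gaussNat_succ_succ]
      exact add_mem (ih _) (mul_mem (X_pow_mem _) (ih _))

lemma gaussInt_mem (a b : ℤ) : gaussInt a b ∈ natPoly.rangeS := by
  unfold gaussInt
  split_ifs
  · exact gaussNat_mem _ _
  · exact zero_mem _

lemma C_mem {q : Polynomial ℤ} (h : q ∈ natPoly.rangeS) : Polynomial.C q ∈ natPoly₂.rangeS := by
  obtain ⟨r, rfl⟩ := h
  exact ⟨Polynomial.C r, by simp⟩

lemma stepTerm_mem (m a b x y : ℕ) : stepTerm m a b x y ∈ natPoly₂.rangeS :=
  mul_mem (mul_mem (mul_mem ⟨Polynomial.X ^ (x - y), by simp⟩ (C_mem (X_pow_mem _)))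
    (C_mem (gaussInt_mem _ _))) (C_mem (gaussInt_mem _ _))

lemma exists_nat_coeffs {P : Polynomial (Polynomial ℤ)} (h : P ∈ natPoly₂.rangeS) :
    ∃ (d : ℕ) (c : ℕ → ℕ → ℕ), P = ∑ i ∈ Finset.range d, ∑ j ∈ Finset.range d,
      (c i j) • ((Polynomial.X : Polynomial (Polynomial ℤ)) ^ i *
        Polynomial.C (Polynomial.X ^ j)) := by
  obtain ⟨Q, rfl⟩ := h
  -- A common bound for the degree in `v` and all degrees in `t`.
  set d := Q.natDegree + 1 + ∑ i ∈ Finset.range (Q.natDegree + 1), ((Q.coeff i).natDegree + 1)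
    with hd
  have hQ : Q.natDegree < d := by omega
  have hc : ∀ i, (Q.coeff i).natDegree < d := by
    intro i
    by_cases hi : i < Q.natDegree + 1
    · have := Finset.single_le_sum (f := fun i => (Q.coeff i).natDegree + 1)
        (fun _ _ => Nat.zero_le _) (Finset.mem_range.mpr hi)
      omega
    · rw [Polynomial.coeff_eq_zero_of_natDegree_lt (by omega)]
      simp only [Polynomial.natDegree_zero]
      omega
  refine ⟨d, fun i j => (Q.coeff i).coeff j, ?_⟩
  conv_lhs => rw [Q.as_sum_range' d hQ, map_sum]
  refine Finset.sum_congr rfl fun i _ => ?_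
  conv_lhs => rw [(Q.coeff i).as_sum_range' d (hc i)]
  rw [map_sum, map_sum]
  refine Finset.sum_congr rfl fun j _ => ?_
  rw [Polynomial.coe_mapRingHom, Polynomial.map_monomial, Polynomial.coe_mapRingHom,
    Polynomial.map_monomial, ← Polynomial.C_mul_X_pow_eq_monomial,
    ← Polynomial.C_mul_X_pow_eq_monomial, nsmul_eq_mul]
  simp
  ring

theorem statement10 (m n : ℕ) (a b : ℕ → ℕ) :
    gPoly m n a b =
      (∑ f ∈ pFinset m n a b,
        ∏ i ∈ Finset.Icc 1 n,
          Polynomial.X ^ (pval m n f (i - 1) - pval m n f i) *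
            Polynomial.C (Polynomial.X ^
              ((pval m n f (i - 1) - pval m n f i) *
                ((a i : ℤ) + m - b i - pval m n f i).toNat)) *
            Polynomial.C (gaussInt (pval m n f (i - 1)) (pval m n f i)) *
            Polynomial.C (gaussInt ((a i : ℤ) + m - pval m n f (i - 1))
              ((a i : ℤ) + m - b i - pval m n f i))) ∧
    ∃ (d : ℕ) (c : ℕ → ℕ → ℕ),
      gPoly m n a b =
        ∑ i ∈ Finset.range d, ∑ j ∈ Finset.range d,
          (c i j) • ((Polynomial.X : Polynomial (Polynomial ℤ)) ^ i *
            Polynomial.C (Polynomial.X ^ j)) := by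
  have h := gPoly_eq_sum n m a b
  refine ⟨h, exists_nat_coeffs ?_⟩
  rw [h]
  exact sum_mem fun f _ => prod_mem fun i _ => stepTerm_mem _ _ _ _ _
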